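/- Let f be a nonnegative Borel measure on ℝⁿ and C ≥ 1 a constant such that f(𝔈) ≤ C f(½𝔈) for every ellipsoid 𝔈 whose center lies in supp f. Then there is a constant C' ≥ 1, depending only on n and C, such that f(S) ≤ C' f(½S) for every open bounded convex set S whose center of mass lies in supp f; that is, f is doubling on bounded convex domains. -/

import Mathlib

/-!
Up to constants depending only on `n`, a convex body `S` with centroid `z` is an ellipsoid
centered at `z`: there is an invertible matrix `A` with `z + A (B_r) ⊆ S ⊆ z + A (B_R)` and `r`, `R`
depending only on `n` (`exists_ellipsoid_sandwich`). Each `z + A (B_ρ)` is an ellipsoid centered at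
`z` (`isEllipsoid_image_ball`, by polar decomposition), so if `z` is in the support of the measure,
halving `k` times, where `2⁻ᵏ R ≤ r / 2`, gives
`f S ≤ f (z + A (B_R)) ≤ Cᵏ f (z + A (B_{r/2})) ≤ Cᵏ f (½ S)`.

The matrix `A` is obtained from two facts. First, the centroid is not too close to the boundary in
any direction: if `x ∈ S` then `z - c (x - z) ∈ closure S` for some `c = c(n) > 0`
(`reflect_mem_closure`); the point in question is the centroid of `S` with its half-size copy at `x`
removed. Second, if the columns `vⱼ` of `A` maximise `|det|` over tuples of points of
`closure S - z`, then all points of `S - z` have coordinates in `[-1, 1]` with respect to the `vⱼ`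
(`exists_auerbach_matrix`), which is the outer inclusion; since `closure S` also contains every
`z - c vⱼ`, convexity gives the inner one.
-/

open MeasureTheory Metric Set Filter Topology
open scoped RealInnerProductSpace ENNReal NNReal

noncomputable section

abbrev E (n : ℕ) := EuclideanSpace ℝ (Fin n)

/-- Center of mass of a set. -/
def centerOfMass {n : ℕ} (S : Set (E n)) : E n :=
  (volume S).toReal⁻¹ • ∫ x in S, x

/-- Dilation of `S` by factor `t` about the point `z`. -/
def dilate {n : ℕ} (z : E n) (t : ℝ) (S : Set (E n)) : Set (E n) :=
  (fun x => z + t • (x - z)) '' S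

/-- Support of a measure. -/
def msupport {n : ℕ} (f : Measure (E n)) : Set (E n) :=
  {x | ∀ r > 0, 0 < f (Metric.ball x r)}

/-- `f` is doubling on bounded convex domains with constant `C`. -/
def DoublingOnConvex {n : ℕ} (f : Measure (E n)) (C : ℝ) : Prop :=
  1 ≤ C ∧ ∀ S : Set (E n), IsOpen S → Bornology.IsBounded S → Convex ℝ S → S.Nonempty →
    centerOfMass S ∈ msupport f →
    f S ≤ ENNReal.ofReal C * f (dilate (centerOfMass S) (1 / 2) S)

/-- `T` pushes the measure `f` forward to `g`. -/
def Pushforward {n : ℕ} (T : E n → E n) (f g : Measure (E n)) : Prop :=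
  ∀ φ : E n → ℝ, Measurable φ → (∃ M, ∀ y, |φ y| ≤ M) →
    ∫ x, φ (T x) ∂f = ∫ y, φ y ∂g

/-- Subdifferential of `u` at `x`. -/
def subgrad {n : ℕ} (u : E n → ℝ) (x : E n) : Set (E n) :=
  {p | ∀ z, u x + ⟪p, z - x⟫ ≤ u z}

/-- Image of a set under the subdifferential. -/
def subgradImage {n : ℕ} (u : E n → ℝ) (B : Set (E n)) : Set (E n) :=
  ⋃ x ∈ B, subgrad u x

/-- `S` is a centered section of `u` at `z` with height `h`, with defining affine
function `x ↦ ⟪p, x⟫ + c`. -/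
def IsCenteredSectionWith {n : ℕ} (u : E n → ℝ) (z : E n) (h : ℝ) (S : Set (E n))
    (p : E n) (c : ℝ) : Prop :=
  ⟪p, z⟫ + c = u z + h ∧ S = {x | u x < ⟪p, x⟫ + c} ∧
    Bornology.IsBounded S ∧ centerOfMass S = z

/-- `S` is a centered section of `u` at `z` with height `h`. -/
def IsCenteredSection {n : ℕ} (u : E n → ℝ) (z : E n) (h : ℝ) (S : Set (E n)) : Prop :=
  ∃ p c, IsCenteredSectionWith u z h S p c

/-- An ellipsoid centered at `z`. -/
def IsEllipsoid {n : ℕ} (z : E n) (S : Set (E n)) : Prop :=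
  ∃ M : Matrix (Fin n) (Fin n) ℝ, M.PosDef ∧
    S = (fun v => z + Matrix.toEuclideanLin M v) '' Metric.ball (0 : E n) 1

lemma norm_toEuclideanLin_of_orthogonal {n : ℕ} {U : Matrix (Fin n) (Fin n) ℝ}
    (hU : U.transpose * U = 1) (v : E n) : ‖Matrix.toEuclideanLin U v‖ = ‖v‖ := by
  have h : ‖Matrix.toEuclideanLin U v‖ ^ 2 = ‖v‖ ^ 2 := by
    rw [← real_inner_self_eq_norm_sq, ← real_inner_self_eq_norm_sq,
      EuclideanSpace.inner_eq_star_dotProduct, EuclideanSpace.inner_eq_star_dotProduct]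
    simp only [star_trivial, Matrix.ofLp_toLpLin, Matrix.toLin'_apply]
    rw [Matrix.dotProduct_mulVec, Matrix.vecMul_mulVec, hU, Matrix.vecMul_one]
  exact (sq_eq_sq₀ (norm_nonneg _) (norm_nonneg _)).1 h

open scoped MatrixOrder in
/-- Every invertible affine image of a ball is an ellipsoid in the sense of `IsEllipsoid`. This is
the polar decomposition `A = P U` with `P = √(A Aᵀ)` positive definite and `U` orthogonal: `U`
preserves balls, so `A` and `P` have the same image of a ball about the origin. -/
lemma isEllipsoid_image_ball {n : ℕ} {A : Matrix (Fin n) (Fin n) ℝ} (hA : A.det ≠ 0)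
    (z : E n) {ρ : ℝ} (hρ : 0 < ρ) :
    IsEllipsoid z ((fun v => z + Matrix.toEuclideanLin A v) '' ball (0 : E n) ρ) := by
  set B := A * A.transpose with hB
  have hBs : B.PosSemidef := by
    have := Matrix.posSemidef_self_mul_conjTranspose A
    rwa [Matrix.conjTranspose_eq_transpose_of_trivial] at this
  set P := CFC.sqrt B with hP
  have hPP : P * P = B := CFC.sqrt_mul_sqrt_self B hBs.nonneg
  have hPs : P.PosSemidef := Matrix.nonneg_iff_posSemidef.1 (CFC.sqrt_nonneg B)
  have hPdet : P.det ≠ 0 := by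
    intro h
    have := congrArg Matrix.det hPP
    rw [Matrix.det_mul, hB, Matrix.det_mul, Matrix.det_transpose, h] at this
    simp at this
    exact hA this
  have hPd : P.PosDef := hPs.posDef_iff_det_ne_zero.2 hPdet
  have hPT : P.transpose = P := by
    have := hPs.isHermitian.eq
    rwa [Matrix.conjTranspose_eq_transpose_of_trivial] at this
  have hPu : IsUnit P.det := isUnit_iff_ne_zero.2 hPdet
  set U := P⁻¹ * A with hU
  have hPU : P * U = A := by rw [hU, Matrix.mul_nonsing_inv_cancel_left _ _ hPu]
  have hUU : U * U.transpose = 1 := by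
    rw [hU, Matrix.transpose_mul, Matrix.transpose_nonsing_inv, hPT, Matrix.mul_assoc,
      ← Matrix.mul_assoc A, ← hB, ← hPP, Matrix.mul_assoc P, Matrix.mul_nonsing_inv _ hPu,
      Matrix.mul_one, Matrix.nonsing_inv_mul _ hPu]
  have hUU' : U.transpose * U = 1 := mul_eq_one_comm.1 hUU
  have hAU : A * U.transpose = P := by rw [← hPU, Matrix.mul_assoc, hUU, Matrix.mul_one]
  have mulE : ∀ (X Y : Matrix (Fin n) (Fin n) ℝ) (v : E n),
      Matrix.toEuclideanLin X (Matrix.toEuclideanLin Y v) = Matrix.toEuclideanLin (X * Y) v := by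
    intro X Y v
    simp [Matrix.toLpLin_apply, Matrix.mulVec_mulVec]
  refine ⟨ρ • P, hPd.smul hρ, ?_⟩
  ext y
  constructor
  · rintro ⟨v, hv, rfl⟩
    refine ⟨ρ⁻¹ • Matrix.toEuclideanLin U v, ?_, ?_⟩
    · rw [mem_ball_zero_iff] at hv ⊢
      rw [norm_smul, norm_toEuclideanLin_of_orthogonal hUU', Real.norm_of_nonneg (by positivity),
        inv_mul_lt_iff₀ hρ, mul_one]
      exact hv
    · simp only [map_smul, LinearMap.smul_apply, mulE, hPU, smul_smul,
        inv_mul_cancel₀ hρ.ne', one_smul]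
  · rintro ⟨w, hw, rfl⟩
    refine ⟨ρ • Matrix.toEuclideanLin U.transpose w, ?_, ?_⟩
    · rw [mem_ball_zero_iff] at hw ⊢
      rw [norm_smul, norm_toEuclideanLin_of_orthogonal (by simpa using hUU),
        Real.norm_of_nonneg hρ.le]
      nlinarith
    · simp only [map_smul, LinearMap.smul_apply, mulE, hAU]

/-- Minkowski's asymmetry bound with a non-optimal constant: for `x ∈ S`, a fixed fraction of the
reflection of `x` through the centroid `z` stays in the closure of `S`. Let `φ` be the homothety
of ratio `1/2` at `x`. Since `φ '' S ⊆ S` has relative volume `2⁻ⁿ` and centroid `(x + z) / 2`, the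
centroid of `S \ φ '' S` is `z - c (x - z)` with `c = (2⁻ⁿ / 2) / (1 - 2⁻ⁿ)`, and as an average of
points of `S` it lies in `closure S`. -/
lemma reflect_mem_closure {n : ℕ} (hn : n ≠ 0) {S : Set (E n)} (hSo : IsOpen S)
    (hSb : Bornology.IsBounded S) (hSc : Convex ℝ S) (hSne : S.Nonempty) {x : E n} (hx : x ∈ S) :
    centerOfMass S - (((1 / 2 : ℝ) ^ n / 2) / (1 - (1 / 2) ^ n)) • (x - centerOfMass S)
      ∈ closure S := by
  set z := centerOfMass S with hz
  set q : ℝ := (1 / 2) ^ n with hq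
  have hq1 : q < 1 := pow_lt_one₀ (by norm_num) (by norm_num) hn
  have hq0 : 0 < q := by positivity
  set φ : E n → E n := fun y => x + (1 / 2 : ℝ) • (y - x) with hφ
  have hvpos : 0 < volume S := hSo.measure_pos volume hSne
  have hvfin : volume S ≠ ∞ := hSb.measure_lt_top.ne
  set V := (volume S).toReal with hV
  have hVpos : 0 < V := ENNReal.toReal_pos hvpos.ne' hvfin
  have hint : IntegrableOn (fun y : E n => y) S := by
    obtain ⟨R, hR⟩ := hSb.exists_norm_le
    refine Measure.integrableOn_of_bounded (M := R) hvfin (by fun_prop) ?_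
    exact (ae_restrict_iff' hSo.measurableSet).2 (Eventually.of_forall hR)
  have hzint : ∫ y in S, y = V • z := by
    rw [hz, centerOfMass, smul_smul, mul_inv_cancel₀ hVpos.ne', one_smul]
  have hφS : φ '' S ⊆ S := by
    rintro _ ⟨y, hy, rfl⟩
    exact hSc.add_smul_sub_mem hx hy (by norm_num)
  have hφd : ∀ y ∈ S, HasFDerivWithinAt φ ((1 / 2 : ℝ) • ContinuousLinearMap.id ℝ (E n)) S y := by
    intro y _
    exact (((hasFDerivWithinAt_id y S).sub_const x).const_smul (1 / 2 : ℝ)).const_add x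
  have hφi : InjOn φ S := by
    intro a _ b _ hab
    simp only [hφ] at hab
    have := smul_right_injective (E n) (by norm_num : (1 / 2 : ℝ) ≠ 0) (add_left_cancel hab)
    exact sub_left_injective this
  have hdet : |((1 / 2 : ℝ) • ContinuousLinearMap.id ℝ (E n)).det| = q := by
    have : ((1 / 2 : ℝ) • ContinuousLinearMap.id ℝ (E n)).det = q := by
      change LinearMap.det ((1 / 2 : ℝ) • (LinearMap.id : E n →ₗ[ℝ] E n)) = q
      rw [LinearMap.det_smul]
      simp [hq]
    rw [this, abs_of_pos hq0]
  have hm : MeasurableSet (φ '' S) :=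
    measurable_image_of_fderivWithin hSo.measurableSet hφd hφi
  have hvol : volume.real (φ '' S) = q * V := by
    have := integral_image_eq_integral_abs_det_fderiv_smul volume hSo.measurableSet hφd hφi
      (fun _ => (1 : ℝ))
    simp only [hdet] at this
    simp at this
    rw [this, mul_comm]; rfl
  have hint2 : ∫ y in φ '' S, y = (q * V) • ((1 / 2 : ℝ) • (x + z)) := by
    have := integral_image_eq_integral_abs_det_fderiv_smul volume hSo.measurableSet hφd hφi
      (fun y => y)
    rw [this]
    simp only [hdet, hφ]
    have hconst : Integrable (fun _ : E n => x) (volume.restrict S) := integrableOn_const hvfin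
    rw [integral_smul, integral_add hconst (by
      exact (hint.sub hconst).smul (1 / 2 : ℝ)),
      integral_smul, integral_sub hint hconst, hzint]
    simp only [setIntegral_const]
    change q • (V • x + (1 / 2 : ℝ) • (V • z - V • x)) = _
    module
  have hDvol : volume.real (S \ φ '' S) = (1 - q) * V := by
    rw [measureReal_sdiff hφS hm, hvol]
    change V - _ = _
    ring
  have hDint : ∫ y in S \ φ '' S, y = V • z - (q * V) • ((1 / 2 : ℝ) • (x + z)) := by
    rw [setIntegral_sdiff hm hint hφS, hint2, hzint]
  have hDpos : 0 < (1 - q) * V := mul_pos (by linarith) hVpos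
  have h0 : volume (S \ φ '' S) ≠ 0 := by
    intro h
    rw [measureReal_def, h] at hDvol
    simp at hDvol
    rcases hDvol with h | h <;> linarith
  -- The average of the identity over `S \ φ '' S` is the required point of `closure S`.
  have key := hSc.set_average_mem_closure (μ := volume) (t := S \ φ '' S) (f := fun y => y) h0
    (measure_ne_top_of_subset sdiff_subset hvfin)
    ((ae_restrict_iff' (hSo.measurableSet.diff hm)).2 (Eventually.of_forall fun y hy => hy.1))
    (hint.mono_set sdiff_subset)
  rw [setAverage_eq, hDvol, hDint] at key
  convert key using 1
  have h1 : (1 - q) ≠ 0 := by linarith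
  match_scalars <;> field_simp <;> ring

/-- An Auerbach basis for `S` at `z`: the columns of `A` maximise `|det|` over all `n`-tuples of
points of `closure S - z`. By Cramer's rule the coordinates of any point of `closure S - z` in this
basis are quotients of two such determinants, hence bounded by `1` in absolute value. -/
lemma exists_auerbach_matrix {n : ℕ} {S : Set (E n)} (hSo : IsOpen S)
    (hSb : Bornology.IsBounded S) {z : E n} (hz : z ∈ S) :
    ∃ A : Matrix (Fin n) (Fin n) ℝ, A.det ≠ 0 ∧
      (∀ j, z + WithLp.toLp 2 (A.col j) ∈ closure S) ∧
      ∀ x ∈ closure S, ∃ t : Fin n → ℝ, (∀ i, |t i| ≤ 1) ∧ x = z + WithLp.toLp 2 (A.mulVec t) := by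
  let F : (Fin n → E n) → Matrix (Fin n) (Fin n) ℝ := fun X => Matrix.of fun i j => (X j - z) i
  have hF : Continuous F := by
    refine continuous_matrix fun i j => ?_
    simp only [F, Matrix.of_apply]
    fun_prop
  have hK : IsCompact (Set.univ.pi fun _ : Fin n => closure S) :=
    isCompact_univ_pi fun _ => hSb.isCompact_closure
  obtain ⟨X, hX, hmax⟩ := hK.exists_isMaxOn ⟨fun _ => z, fun _ _ => subset_closure hz⟩
    (f := fun X => |(F X).det|) (hF.matrix_det.abs.continuousOn)
  have hXm : ∀ j, X j ∈ closure S := fun j => hX j (mem_univ j)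
  -- The maximum is nonzero: a small multiple of the standard basis is a competitor.
  have hdet : (F X).det ≠ 0 := by
    obtain ⟨ε, hε, hball⟩ := Metric.isOpen_iff.1 hSo z hz
    have h1 : (fun j => z + EuclideanSpace.single j (ε / 2)) ∈
        Set.univ.pi fun _ : Fin n => closure S := by
      refine fun j _ => subset_closure (hball ?_)
      simp [abs_of_pos hε, hε]
    have h2 : F (fun j => z + EuclideanSpace.single j (ε / 2)) = (ε / 2) • 1 := by
      ext i j
      simp [F, Matrix.one_apply]
    have h3 := hmax h1
    simp only [mem_ofPred_eq, h2, Matrix.det_smul, Matrix.det_one, mul_one] at h3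
    have h4 : 0 < |(ε / 2) ^ Fintype.card (Fin n)| := by positivity
    exact abs_pos.1 (h4.trans_le h3)
  refine ⟨F X, hdet, fun j => ?_, fun x hx => ?_⟩
  · convert hXm j using 1
    ext i
    simp [F]
  · refine ⟨(F X).det⁻¹ • (F X).cramer (x - z).ofLp, fun i => ?_, ?_⟩
    · have h1 : Function.update X i x ∈ Set.univ.pi fun _ : Fin n => closure S := by
        intro j _
        rcases eq_or_ne j i with rfl | h
        · simpa using hx
        · simpa [h] using hXm j
      have h2 : F (Function.update X i x) = (F X).updateCol i (x - z).ofLp := by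
        ext a b
        rcases eq_or_ne b i with rfl | h
        · simp [F]
        · simp [F, h]
      have h3 := hmax h1
      simp only [mem_ofPred_eq, h2] at h3
      rw [Pi.smul_apply, Matrix.cramer_apply, smul_eq_mul, abs_mul, abs_inv]
      exact inv_mul_le_one_of_le₀ h3 (abs_nonneg _)
    · rw [Matrix.mulVec_smul, Matrix.mulVec_cramer, smul_smul, inv_mul_cancel₀ hdet, one_smul]
      simp

/-- A John-type theorem with the ellipsoids centered at the centroid: up to constants depending
only on `n`, `S` is an affine image of a ball about the origin. The outer inclusion holds as the
cube `[-1, 1]ⁿ` lies in the ball of radius `n + 1`; the inner one combines the Auerbach basis at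
the centroid with `reflect_mem_closure`. -/
lemma exists_ellipsoid_sandwich {n : ℕ} (hn : n ≠ 0) {S : Set (E n)} (hSo : IsOpen S)
    (hSb : Bornology.IsBounded S) (hSc : Convex ℝ S) (hSne : S.Nonempty) :
    ∃ A : Matrix (Fin n) (Fin n) ℝ, A.det ≠ 0 ∧
      S ⊆ (fun v => centerOfMass S + Matrix.toEuclideanLin A v) '' ball (0 : E n) (n + 1) ∧
      (fun v => centerOfMass S + Matrix.toEuclideanLin A v) ''
        ball (0 : E n) (((1 / 2 : ℝ) ^ n / 2) / n) ⊆ S := by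
  set z := centerOfMass S with hzdef
  have hn0 : (0 : ℝ) < n := by positivity
  set q : ℝ := (1 / 2) ^ n with hq
  have hq2 : q ≤ 1 / 2 := pow_le_of_le_one (by norm_num) (by norm_num) hn
  have hq0 : 0 < q := by positivity
  set c : ℝ := q / 2 / (1 - q) with hc
  have hc0 : 0 < c := by apply div_pos <;> linarith
  have hqc : q / 2 ≤ c := by
    rw [hc, le_div_iff₀ (by linarith)]
    nlinarith
  have hrefl : ∀ x ∈ closure S, z - c • (x - z) ∈ closure S := by
    intro x hx
    have hmaps : MapsTo (fun x => z - c • (x - z)) S (closure S) :=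
      fun x hx => reflect_mem_closure hn hSo hSb hSc hSne hx
    have := hmaps.closure (by fun_prop) hx
    rwa [closure_closure] at this
  have hint : interior (closure S) = S := by
    rw [hSc.interior_closure_eq_interior_of_nonempty_interior (by rwa [hSo.interior_eq]),
      hSo.interior_eq]
  -- `z` lies strictly between an interior point of `S` and a point of `closure S`.
  have hz : z ∈ S := by
    obtain ⟨x, hx⟩ := hSne
    have hx' : x ∈ interior S := by rwa [hSo.interior_eq]
    have := hSc.openSegment_interior_closure_subset_interior hx' (hrefl x (subset_closure hx))
    rw [hSo.interior_eq] at this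
    apply this
    -- `z = (c / (1 + c)) x + (1 / (1 + c)) (z - c (x - z))`.
    refine ⟨c / (1 + c), 1 / (1 + c), by positivity, by positivity, by field_simp; ring, ?_⟩
    match_scalars <;> field_simp <;> ring
  obtain ⟨A, hA, hcol, hbox⟩ := exists_auerbach_matrix hSo hSb hz
  refine ⟨A, hA, ?_, ?_⟩
  · intro x hx
    obtain ⟨t, ht, rfl⟩ := hbox x (subset_closure hx)
    refine ⟨WithLp.toLp 2 t, ?_, by simp [Matrix.toLpLin_apply]⟩
    rw [mem_ball_zero_iff, EuclideanSpace.norm_eq, Real.sqrt_lt' (by positivity)]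
    calc ∑ i, ‖t i‖ ^ 2 ≤ ∑ _i : Fin n, (1 : ℝ) :=
          Finset.sum_le_sum fun i _ => pow_le_one₀ (norm_nonneg _) (ht i)
      _ = n := by simp
      _ < (n + 1 : ℝ) ^ 2 := by nlinarith
  · -- The closed convex hull of the points `z ± c vⱼ` absorbs the small ball.
    have hseg : ∀ j (s : ℝ), |s| ≤ q / 2 → z + s • WithLp.toLp 2 (A.col j) ∈ closure S := by
      intro j s hs
      have h1 := abs_le.1 (hs.trans hqc)
      have h2 := (abs_le.1 hs).2
      have := hSc.closure (hrefl _ (hcol j)) (hcol j) (a := (1 - s) / (1 + c))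
        (b := (s + c) / (1 + c)) (div_nonneg (by linarith) (by linarith))
        (div_nonneg (by linarith) (by linarith)) (by field_simp; ring)
      convert this using 1
      match_scalars <;> field_simp <;> ring
    have hsub : (fun v => z + Matrix.toEuclideanLin A v) '' ball (0 : E n) (q / 2 / n) ⊆
        closure S := by
      rintro _ ⟨w, hw, rfl⟩
      rw [mem_ball_zero_iff, lt_div_iff₀ hn0] at hw
      have hmem := hSc.closure.sum_mem (t := Finset.univ) (w := fun _ : Fin n => (1 / n : ℝ))
        (z := fun j => z + ((n : ℝ) * w j) • WithLp.toLp 2 (A.col j))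
        (fun _ _ => by positivity) (by simp [hn]) (fun j _ => by
          apply hseg
          rw [abs_mul, abs_of_pos hn0]
          have : |w j| ≤ ‖w‖ := PiLp.norm_apply_le w j
          nlinarith)
      convert hmem using 1
      ext i
      have hne : (n : ℝ) ≠ 0 := hn0.ne'
      simp [Matrix.toLpLin_apply, Matrix.mulVec, dotProduct, Finset.sum_add_distrib, hne]
      refine Finset.sum_congr rfl fun j _ => ?_
      field_simp
    have hopen : IsOpen ((fun v => z + Matrix.toEuclideanLin A v) '' ball (0 : E n) (q / 2 / n)) := by
      have hsurj : Function.Surjective (Matrix.toEuclideanLin A) := by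
        intro y
        refine ⟨WithLp.toLp 2 (A⁻¹.mulVec y.ofLp), ?_⟩
        simp [Matrix.toLpLin_apply, Matrix.mulVec_mulVec,
          Matrix.mul_nonsing_inv _ (isUnit_iff_ne_zero.2 hA)]
      exact ((isOpenMap_add_left z).comp
        (LinearMap.isOpenMap_of_finiteDimensional _ hsurj)) _ isOpen_ball
    exact hint ▸ interior_maximal hsub hopen

/-- **Doubling on ellipsoids implies doubling on bounded convex domains.**
(Corollary 2.5.)  If `f (𝔈) ≤ C f(½𝔈)` for every ellipsoid `𝔈` whose center lies in
the support of `f`, then `f` is doubling on bounded convex domains with a constant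
`C'` depending only on `n` and `C`. -/
theorem doubling_on_ellipsoids_implies_doubling (n : ℕ) (C : ℝ) (hC : 1 ≤ C) :
    ∃ C' : ℝ, ∀ f : Measure (E n),
      (∀ (z : E n) (S : Set (E n)), IsEllipsoid z S → z ∈ msupport f →
        f S ≤ ENNReal.ofReal C * f (dilate z (1 / 2) S)) →
      DoublingOnConvex f C' := by
  rcases eq_or_ne n 0 with rfl | hn
  · -- In dimension zero, `S` and its dilation are both the whole one-point space.
    refine ⟨1, fun f _ => ⟨le_rfl, fun S _ _ _ hne _ => ?_⟩⟩
    have h : dilate (centerOfMass S) (1 / 2) S = univ :=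
      Subsingleton.eq_univ_of_nonempty (hne.image _)
    rw [ENNReal.ofReal_one, one_mul, h]
    exact measure_mono (subset_univ S)
  have hn0 : (0 : ℝ) < n := by positivity
  set r : ℝ := ((1 / 2 : ℝ) ^ n / 2) / n with hr
  have hr0 : 0 < r := by positivity
  -- `k` halvings shrink the outer ellipsoid into the half of the inner one.
  obtain ⟨k, hk⟩ := exists_pow_lt_of_lt_one (show 0 < r / 2 / (n + 1) by positivity)
    (show (1 / 2 : ℝ) < 1 by norm_num)
  refine ⟨C ^ k, fun f hf => ⟨one_le_pow₀ hC, fun S hSo hSb hSc hSne hsupp => ?_⟩⟩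
  obtain ⟨A, hA, hout, hin⟩ := exists_ellipsoid_sandwich hn hSo hSb hSc hSne
  set z := centerOfMass S
  let 𝓔 : ℝ → Set (E n) := fun ρ => (fun v => z + Matrix.toEuclideanLin A v) '' ball (0 : E n) ρ
  have hdil : ∀ ρ : ℝ, dilate z (1 / 2) (𝓔 ρ) = 𝓔 (1 / 2 * ρ) := by
    intro ρ
    have hb : ball (0 : E n) (1 / 2 * ρ) = (fun v => (1 / 2 : ℝ) • v) '' ball (0 : E n) ρ := by
      rw [Set.image_smul, _root_.smul_ball (by norm_num : (1 / 2 : ℝ) ≠ 0)]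
      norm_num
    simp only [𝓔, dilate, hb, image_image, add_sub_cancel_left, map_smul]
  have hiter : ∀ m : ℕ, f (𝓔 (n + 1)) ≤ ENNReal.ofReal (C ^ m) * f (𝓔 ((1 / 2) ^ m * (n + 1))) := by
    intro m
    induction m with
    | zero => simp
    | succ m ih =>
      refine ih.trans ?_
      have h := hf z (𝓔 ((1 / 2) ^ m * (n + 1)))
        (isEllipsoid_image_ball hA z (by positivity)) hsupp
      rw [hdil, ← mul_assoc, ← pow_succ'] at h
      rw [pow_succ, ENNReal.ofReal_mul (by positivity), mul_assoc]
      gcongr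
  calc f S ≤ f (𝓔 (n + 1)) := measure_mono hout
    _ ≤ ENNReal.ofReal (C ^ k) * f (𝓔 ((1 / 2) ^ k * (n + 1))) := hiter k
    _ ≤ ENNReal.ofReal (C ^ k) * f (dilate z (1 / 2) S) := by
      gcongr
      have h1 : 𝓔 ((1 / 2) ^ k * (n + 1)) ⊆ 𝓔 (1 / 2 * r) := by
        apply image_mono
        apply ball_subset_ball
        rw [lt_div_iff₀ (by positivity)] at hk
        linarith
      rw [← hdil] at h1
      exact h1.trans (image_mono hin)
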